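/- arXiv:2208.09050 — 2 statements merged into one kernel-verified Lean document; each statement's English description precedes it below -/
import Mathlib

section
/- Let G be a finite group and X ⊆ G a totally symmetric set of cardinality k > 3. If |G| = (k+1)!, then G is isomorphic to the symmetric group S_{k+1}. -/
/-!
Let `H` and `N` be the normalizer and the centralizer of `X`. Total symmetry gives `H / N ≅ Sym X`,
so `|G| = (k + 1)!` means `|N| * [G : H] = k + 1`. The tool for everything else is that a subset
`Y ⊆ X` omitting at least two points generates no further point of `X`: exchanging such a point `z`
with another omitted one would fix `⟨Y⟩` pointwise and still move `z`.

For distinct `a, b ∈ X` this shows that `a` and `b` commute as soon as `a` or `a⁻¹ * b` lies in `H`,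
because `a * b * a⁻¹`, respectively `a⁻¹ * b * a`, is then a point of `X` in `⟨a, b⟩`. By
2-transitivity, if one pair of distinct points commutes then `X` is commutative. In that case `N`
contains `X ∪ {1}` and also a product of two points of `X`, too many elements for a divisor of
`k + 1`. Hence `X` is not commutative and the cosets of `1` and of the points of `X` in `G ⧸ H` are
distinct, which forces `[G : H] = k + 1` and `N = 1`. The kernel of the action of `G` on `G ⧸ H`
centralizes `X`, so the action is faithful, and comparing orders gives `G ≅ Sym (G ⧸ H)`.
-/

/-- A subset `X` of a group `G` is *totally symmetric* if every permutation of `X`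
can be realized by conjugation by an element of `G`. -/
def IsTotallySymmetric {G : Type*} [Group G] (X : Set G) : Prop :=
  ∀ π : X ≃ X, ∃ g : G, ∀ x : X, g * (x : G) * g⁻¹ = ((π x : X) : G)

open Subgroup
open scoped Nat

section Conjugation

variable {G : Type*} [Group G]

theorem mem_centralizer_iff_conj_eq {X : Set G} {g : G} :
    g ∈ centralizer X ↔ ∀ x ∈ X, g * x * g⁻¹ = x := by
  simp only [mem_centralizer_iff, mul_inv_eq_iff_eq_mul, eq_comm (a := g * _)]

/-- The action by conjugation of the normalizer of a set on that set. -/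
def normalizerConjPerm (X : Set G) : normalizer X →* Equiv.Perm X where
  toFun g := (MulAut.toPerm G (MulAut.conj (g : G))).subtypePerm
    fun x ↦ (mem_set_normalizer_iff.1 g.2 x).symm
  map_one' := by ext; simp
  map_mul' g h := by
    ext x
    exact DFunLike.congr_fun (map_mul MulAut.conj (g : G) h) (x : G)

@[simp]
theorem coe_normalizerConjPerm_apply {X : Set G} (g : normalizer X) (x : X) :
    (normalizerConjPerm X g x : G) = g * x * (g : G)⁻¹ := rfl

theorem ker_normalizerConjPerm (X : Set G) :
    (normalizerConjPerm X).ker = (centralizer X).subgroupOf (normalizer X) := by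
  ext g
  simp only [MonoidHom.mem_ker, Equiv.ext_iff, Equiv.Perm.one_apply, Subtype.ext_iff,
    coe_normalizerConjPerm_apply, Subtype.forall, mem_subgroupOf, mem_centralizer_iff_conj_eq]

theorem normalCore_normalizer_le_centralizer {X : Set G}
    (hinj : X.InjOn (QuotientGroup.mk : G → G ⧸ normalizer X)) :
    (normalizer X).normalCore ≤ centralizer X := by
  refine fun g hg ↦ mem_centralizer_iff_conj_eq.2 fun x hx ↦ ?_
  have hgH : g ∈ normalizer X := normalCore_le _ hg
  have hconj : x⁻¹ * g * x ∈ normalizer X := by simpa only [inv_inv] using hg x⁻¹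
  refine (hinj hx ((mem_set_normalizer_iff.1 hgH x).1 hx) (QuotientGroup.eq.2 ?_)).symm
  simpa only [mul_assoc] using mul_mem hconj (inv_mem hgH)

theorem nonempty_mulEquiv_perm_of_normalCore_eq_bot {H : Subgroup G} {n : ℕ}
    (hcore : H.normalCore = ⊥) (hindex : H.index = n) (hcard : Nat.card G = n !) :
    Nonempty (G ≃* Equiv.Perm (Fin n)) := by
  have : Finite G := Nat.finite_of_card_ne_zero (hcard ▸ n.factorial_ne_zero)
  have hinj : Function.Injective (MulAction.toPermHom G (G ⧸ H)) :=
    (MonoidHom.ker_eq_bot_iff _).1 (H.normalCore_eq_ker ▸ hcore)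
  have hbij := hinj.bijective_of_nat_card_le (by rw [Nat.card_perm, ← index, hindex, hcard])
  have e : G ⧸ H ≃ Fin n := Finite.equivFinOfCardEq hindex
  exact ⟨(MulEquiv.ofBijective _ hbij).trans e.permCongrHom⟩

end Conjugation

namespace IsTotallySymmetric

variable {G : Type*} [Group G] {X : Set G}

theorem normalizerConjPerm_surjective (hX : IsTotallySymmetric X) :
    Function.Surjective (normalizerConjPerm X) := by
  intro π
  obtain ⟨g, hg⟩ := hX π
  have himage : MulAut.conj g '' X = X := by
    calc MulAut.conj g '' X = Set.range (Subtype.val ∘ π) := by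
          rw [Set.image_eq_range]
          exact congrArg Set.range (funext hg)
      _ = X := by rw [π.surjective.range_comp, Subtype.range_coe]
  exact ⟨⟨g, mem_normalizer_iff_conj_image_eq.2 himage⟩, Equiv.ext fun x ↦ Subtype.ext (hg x)⟩

theorem relIndex_centralizer_normalizer [Finite X] (hX : IsTotallySymmetric X) :
    (centralizer X).relIndex (normalizer X) = X.ncard ! := by
  rw [relIndex, ← ker_normalizerConjPerm, index_ker,
    MonoidHom.range_eq_top.2 hX.normalizerConjPerm_surjective, card_top, Nat.card_perm,
    Nat.card_coe_set_eq]

theorem card_centralizer_mul_index_normalizer [Finite X] (hX : IsTotallySymmetric X)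
    (hcard : Nat.card G = (X.ncard + 1)!) :
    Nat.card (centralizer X) * (normalizer X).index = X.ncard + 1 := by
  apply Nat.eq_of_mul_eq_mul_left X.ncard.factorial_pos
  calc X.ncard ! * (Nat.card (centralizer X) * (normalizer X).index)
      = Nat.card (centralizer X) * (centralizer X).index := by
        rw [← relIndex_mul_index (centralizer_le_normalizer X),
          hX.relIndex_centralizer_normalizer, mul_left_comm]
    _ = X.ncard ! * (X.ncard + 1) := by
        rw [card_mul_index, hcard, Nat.factorial_succ, mul_comm]

theorem mem_of_mem_closure (hX : IsTotallySymmetric X) {Y : Set G} (hYX : Y ⊆ X)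
    (hdiff : (X \ Y).Nontrivial) {z : G} (hzX : z ∈ X) (hz : z ∈ closure Y) : z ∈ Y := by
  classical
  by_contra hzY
  obtain ⟨d, ⟨hdX, hdY⟩, hdz⟩ := hdiff.exists_ne z
  obtain ⟨g, hg⟩ := hX (Equiv.swap ⟨z, hzX⟩ ⟨d, hdX⟩)
  have hfix : Set.EqOn (MulAut.conj g).toMonoidHom (MonoidHom.id G) Y := by
    intro y hy
    have hyz : (⟨y, hYX hy⟩ : X) ≠ ⟨z, hzX⟩ := fun h ↦ hzY (Subtype.mk.inj h ▸ hy)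
    have hyd : (⟨y, hYX hy⟩ : X) ≠ ⟨d, hdX⟩ := fun h ↦ hdY (Subtype.mk.inj h ▸ hy)
    exact (hg ⟨y, hYX hy⟩).trans (congrArg Subtype.val (Equiv.swap_apply_of_ne_of_ne hyz hyd))
  have hgz : g * z * g⁻¹ = d := by simpa using hg ⟨z, hzX⟩
  exact hdz (hgz.symm.trans (MonoidHom.eqOn_closure hfix hz))

theorem one_notMem (hX : IsTotallySymmetric X) (hnontriv : X.Nontrivial) : (1 : G) ∉ X :=
  fun h ↦ hX.mem_of_mem_closure (Set.empty_subset X) (by rwa [Set.sdiff_empty]) h (one_mem _)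

theorem eq_or_eq_of_mem_closure_pair (hX : IsTotallySymmetric X) (h3 : 3 < X.ncard) {a b z : G}
    (ha : a ∈ X) (hb : b ∈ X) (hz : z ∈ X) (hzab : z ∈ closure {a, b}) : z = a ∨ z = b := by
  have hdiff : 1 < (X \ {a, b}).ncard := by
    have := Set.le_ncard_sdiff {a, b} X
    have := Set.ncard_insert_le a {b}
    rw [Set.ncard_singleton] at this
    lia
  exact hX.mem_of_mem_closure (Set.pair_subset ha hb)
    (Set.one_lt_ncard_iff_nontrivial_and_finite.1 hdiff).1 hz hzab

theorem mul_notMem (hX : IsTotallySymmetric X) (h3 : 3 < X.ncard) {a b : G} (ha : a ∈ X)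
    (hb : b ∈ X) : a * b ∉ X := by
  intro hab
  have h1 : (1 : G) ∉ X := hX.one_notMem (Set.one_lt_ncard_iff_nontrivial_and_finite.1 (by lia)).1
  have hmem : a * b ∈ closure {a, b} :=
    mul_mem (mem_closure_of_mem (by simp)) (mem_closure_of_mem (by simp))
  rcases hX.eq_or_eq_of_mem_closure_pair h3 ha hb hab hmem with h | h
  · exact h1 (mul_eq_left.1 h ▸ hb)
  · exact h1 (mul_eq_right.1 h ▸ ha)

theorem commute_of_mem_normalizer (hX : IsTotallySymmetric X) (h3 : 3 < X.ncard) {a b : G}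
    (ha : a ∈ X) (hb : b ∈ X) (haH : a ∈ normalizer X) : Commute a b := by
  have hconj : a * b * a⁻¹ ∈ X := (mem_set_normalizer_iff.1 haH b).1 hb
  have ha' : a ∈ closure {a, b} := mem_closure_of_mem (by simp)
  have hb' : b ∈ closure {a, b} := mem_closure_of_mem (by simp)
  rcases hX.eq_or_eq_of_mem_closure_pair h3 ha hb hconj (mul_mem (mul_mem ha' hb') (inv_mem ha'))
    with h | h
  · rw [mul_left_cancel (mul_inv_eq_iff_eq_mul.1 h)]
  · exact mul_inv_eq_iff_eq_mul.1 h

theorem commute_of_inv_mul_mem_normalizer (hX : IsTotallySymmetric X) (h3 : 3 < X.ncard) {a b : G}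
    (ha : a ∈ X) (hb : b ∈ X) (habH : a⁻¹ * b ∈ normalizer X) : Commute a b := by
  have hconj : a⁻¹ * b * a ∈ X := by
    simpa only [mul_inv_rev, inv_inv, mul_assoc, mul_inv_cancel_left]
      using (mem_set_normalizer_iff.1 habH b).1 hb
  have ha' : a ∈ closure {a, b} := mem_closure_of_mem (by simp)
  have hb' : b ∈ closure {a, b} := mem_closure_of_mem (by simp)
  rcases hX.eq_or_eq_of_mem_closure_pair h3 ha hb hconj (mul_mem (mul_mem (inv_mem ha') hb') ha')
    with h | h
  · rw [inv_mul_eq_one.1 (mul_eq_right.1 h)]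
  · rw [mul_assoc, inv_mul_eq_iff_eq_mul] at h
    exact h.symm

theorem exists_conj_eq_and_conj_eq (hX : IsTotallySymmetric X) {a b c d : G} (ha : a ∈ X)
    (hb : b ∈ X) (hc : c ∈ X) (hd : d ∈ X) (hab : a ≠ b) (hcd : c ≠ d) :
    ∃ g : G, g * a * g⁻¹ = c ∧ g * b * g⁻¹ = d := by
  have hab' : (⟨a, ha⟩ : X) ≠ ⟨b, hb⟩ := Subtype.coe_ne_coe.1 hab
  have hcd' : (⟨c, hc⟩ : X) ≠ ⟨d, hd⟩ := Subtype.coe_ne_coe.1 hcd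
  obtain ⟨π, hπa, hπb⟩ := MulAction.is_two_pretransitive_iff.1
    (Equiv.Perm.isMultiplyPretransitive X 2) hab' hcd'
  obtain ⟨g, hg⟩ := hX π
  exact ⟨g, (hg _).trans (congrArg Subtype.val hπa), (hg _).trans (congrArg Subtype.val hπb)⟩

theorem pairwise_commute (hX : IsTotallySymmetric X) {a b : G} (ha : a ∈ X) (hb : b ∈ X)
    (hne : a ≠ b) (hab : Commute a b) : X.Pairwise Commute := by
  intro c hc d hd hcd
  obtain ⟨g, rfl, rfl⟩ := hX.exists_conj_eq_and_conj_eq ha hb hc hd hne hcd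
  exact (Commute.conj_iff g).2 hab

theorem ncard_add_one_lt_card_centralizer [Finite (centralizer X)] (hX : IsTotallySymmetric X)
    (h3 : 3 < X.ncard) (hcomm : X.Pairwise Commute) :
    X.ncard + 1 < Nat.card (centralizer X) := by
  have hXN : X ⊆ centralizer X := fun a ha ↦ mem_centralizer_iff.2 fun x hx ↦
    hcomm.of_refl hx ha
  obtain ⟨hnontriv, hfin⟩ := Set.one_lt_ncard_iff_nontrivial_and_finite.1 (show 1 < X.ncard by lia)
  obtain ⟨a, ha⟩ := hnontriv.nonempty
  obtain ⟨b, hb, hba⟩ := hnontriv.exists_ne a⁻¹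
  have hab : a * b ∉ insert 1 X := by
    rintro (h | h)
    · exact hba (eq_inv_of_mul_eq_one_right h)
    · exact hX.mul_notMem h3 ha hb h
  have hssub : insert 1 X ⊂ (centralizer X : Set G) :=
    Set.ssubset_iff_exists.2 ⟨Set.insert_subset (one_mem _) hXN,
      a * b, mul_mem (hXN ha) (hXN hb), hab⟩
  calc X.ncard + 1 = (insert 1 X).ncard :=
        (Set.ncard_insert_of_notMem (hX.one_notMem hnontriv) hfin).symm
    _ < Nat.card (centralizer X) := Set.ncard_lt_ncard hssub

theorem not_pairwise_commute (hX : IsTotallySymmetric X) (h3 : 3 < X.ncard)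
    (hcard : Nat.card G = (X.ncard + 1)!) : ¬X.Pairwise Commute := by
  intro hcomm
  have : Finite G := Nat.finite_of_card_ne_zero (hcard ▸ Nat.factorial_ne_zero _)
  have hdvd : Nat.card (centralizer X) ∣ X.ncard + 1 :=
    Dvd.intro _ (hX.card_centralizer_mul_index_normalizer hcard)
  exact (Nat.le_of_dvd X.ncard.succ_pos hdvd).not_gt (hX.ncard_add_one_lt_card_centralizer h3 hcomm)

theorem injOn_mk_normalizer (hX : IsTotallySymmetric X) (h3 : 3 < X.ncard)
    (hncomm : ¬X.Pairwise Commute) :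
    (insert 1 X).InjOn (QuotientGroup.mk : G → G ⧸ normalizer X) := by
  have hnontriv : X.Nontrivial := (Set.one_lt_ncard_iff_nontrivial_and_finite.1 (by lia)).1
  refine (Set.injOn_insert (hX.one_notMem hnontriv)).2 ⟨fun a ha b hb hab ↦ ?_, ?_⟩
  · by_contra hne
    exact hncomm <| hX.pairwise_commute ha hb hne <|
      hX.commute_of_inv_mul_mem_normalizer h3 ha hb (QuotientGroup.eq.1 hab)
  · rintro ⟨a, ha, ha1⟩
    have haH : a ∈ normalizer X := by simpa using QuotientGroup.eq.1 ha1.symm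
    obtain ⟨b, hb, hba⟩ := hnontriv.exists_ne a
    exact hncomm <| hX.pairwise_commute ha hb hba.symm <|
      hX.commute_of_mem_normalizer h3 ha hb haH

theorem ncard_add_one_le_index_normalizer [(normalizer X).FiniteIndex] (hX : IsTotallySymmetric X)
    (h3 : 3 < X.ncard) (hncomm : ¬X.Pairwise Commute) :
    X.ncard + 1 ≤ (normalizer X).index := by
  obtain ⟨hnontriv, hfin⟩ := Set.one_lt_ncard_iff_nontrivial_and_finite.1 (show 1 < X.ncard by lia)
  calc X.ncard + 1 = (insert 1 X).ncard :=
        (Set.ncard_insert_of_notMem (hX.one_notMem hnontriv) hfin).symm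
    _ = (QuotientGroup.mk '' insert 1 X : Set (G ⧸ normalizer X)).ncard :=
        ((hX.injOn_mk_normalizer h3 hncomm).ncard_image).symm
    _ ≤ (normalizer X).index := Set.ncard_le_card _

end IsTotallySymmetric

theorem totally_symmetric_card_eq_iff_symm {G : Type*} [Group G] [Finite G]
    (X : Set G) (k : ℕ) (hX : IsTotallySymmetric X) (hk : X.ncard = k) (h3 : 3 < k)
    (hcard : Nat.card G = (k + 1).factorial) :
    Nonempty (G ≃* Equiv.Perm (Fin (k + 1))) := by
  subst hk
  have hmul := hX.card_centralizer_mul_index_normalizer hcard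
  have hncomm : ¬X.Pairwise Commute := hX.not_pairwise_commute h3 hcard
  have hindex : (normalizer X).index = X.ncard + 1 :=
    le_antisymm (hmul ▸ Nat.le_mul_of_pos_left _ Nat.card_pos)
      (hX.ncard_add_one_le_index_normalizer h3 hncomm)
  have hcentralizer : centralizer X = ⊥ :=
    card_eq_one.1 ((Nat.mul_eq_right (Nat.succ_ne_zero _)).1 (hindex ▸ hmul))
  have hcore : (normalizer X).normalCore = ⊥ :=
    eq_bot_mono (normalCore_normalizer_le_centralizer
      ((hX.injOn_mk_normalizer h3 hncomm).mono (Set.subset_insert 1 X))) hcentralizer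
  exact nonempty_mulEquiv_perm_of_normalCore_eq_bot hcore hindex hcard
end

section
/- Let f : S_4 → S_4 be a group homomorphism whose image is not cyclic. Then either f is an inner automorphism, or there exists σ ∈ S_4 such that f((1 4)) = σ (1 2) σ⁻¹, f((2 4)) = σ (1 3) σ⁻¹, and f((3 4)) = σ (2 3) σ⁻¹ (i.e., f is conjugate to the exceptional map S_4 → S_3 composed with the standard inclusion S_3 → S_4). -/
/-!
A homomorphism out of a symmetric group that kills a 3-cycle kills the whole alternating group, so
its range is cyclic. Hence, if the range of `f : S_4 → S_4` is not cyclic, the images of two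
distinct transpositions sharing a point do not commute, since the square of the product of these
transpositions is a 3-cycle. Even involutions of four points lie in the Klein four-group and
commute with each other, so `f` maps transpositions to transpositions. The images of `(1 4)`,
`(2 4)`, `(3 4)` are therefore three pairwise intersecting edges of the complete graph on four
vertices, and such edges form a star or a triangle. A star makes `f` a conjugation; a triangle is
the exceptional case.
-/

open Equiv Equiv.Perm

section Hom

variable {α G : Type*} [DecidableEq α] [Group G]

lemma isCyclic_range_of_isThreeCycle_mem_ker [Fintype α] {f : Perm α →* G} {σ : Perm α}
    (hσ : σ.IsThreeCycle) (hf : σ ∈ f.ker) : IsCyclic f.range := by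
  have alternating_le_ker : alternatingGroup α ≤ f.ker := by
    rw [← closure_three_cycles_eq_alternating, Subgroup.closure_le]
    intro τ hτ
    obtain ⟨π, rfl⟩ := isConj_iff.1 (isConj_iff_cycleType_eq.2 (hσ.trans hτ.symm))
    exact f.normal_ker.conj_mem σ hf π
  have : Nontrivial α := Fintype.one_lt_card_iff_nontrivial.1 <|
    calc 1 < σ.support.card := by simp [hσ.card_support]
      _ ≤ Fintype.card α := σ.support.card_le_univ
  have card_range_dvd_two : Nat.card f.range ∣ 2 := by
    rw [← Subgroup.index_ker, ← alternatingGroup.index_eq_two (α := α)]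
    exact Subgroup.index_dvd_of_le alternating_le_ker
  exact isCyclic_of_card_dvd_prime card_range_dvd_two

lemma not_commute_map_swap [Finite α] {f : Perm α →* G} (hf : ¬ IsCyclic f.range) {i j k : α}
    (hij : i ≠ j) (hik : i ≠ k) (hjk : j ≠ k) : ¬ Commute (f (swap i k)) (f (swap j k)) := by
  intro hcomm
  have := Fintype.ofFinite α
  have isThreeCycle : (swap i k * swap j k).IsThreeCycle := by
    simpa only [swap_comm k] using isThreeCycle_swap_mul_swap_same hik.symm hjk.symm hij
  refine hf (isCyclic_range_of_isThreeCycle_mem_ker isThreeCycle.isThreeCycle_sq ?_)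
  rw [MonoidHom.mem_ker, ← pow_two, map_pow, map_mul, hcomm.mul_pow, ← map_pow, ← map_pow,
    pow_two, pow_two, swap_mul_self, swap_mul_self, map_one, one_mul]

lemma closure_swap_right_eq_top [Finite α] (c : α) :
    Subgroup.closure ((swap · c) '' {c}ᶜ) = ⊤ := by
  have isPretransitive :
      MulAction.IsPretransitive (Subgroup.closure ((swap · c) '' {c}ᶜ)) α := by
    refine (MulAction.isPretransitive_iff_base c).2 fun i => ?_
    obtain rfl | hi := eq_or_ne i c
    · exact ⟨1, one_smul _ _⟩
    · exact ⟨⟨swap i c, Subgroup.subset_closure ⟨i, hi, rfl⟩⟩, swap_apply_right i c⟩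
  refine closure_of_isSwap_of_isPretransitive ?_
  rintro _ ⟨i, hi, rfl⟩
  exact ⟨i, c, hi, rfl⟩

end Hom

section FourPoints

variable {α : Type*} [DecidableEq α] [Fintype α] {σ τ : Perm α}

lemma commute_of_sq_eq_one_of_sign_eq_one (hα : Nat.card α = 4) (hσ : σ ^ 2 = 1)
    (hτ : τ ^ 2 = 1) (hσ' : sign σ = 1) (hτ' : sign τ = 1) : Commute σ τ := by
  have mem_kleinFour {π : Perm α} (hπ : π ^ 2 = 1) (hπ' : sign π = 1) :
      ⟨π, hπ'⟩ ∈ alternatingGroup.kleinFour α := by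
    rw [← SetLike.mem_coe, alternatingGroup.coe_kleinFour_of_card_eq_four hα]
    simpa [Subtype.ext_iff] using alternatingGroup.mem_kleinFour_of_order_two_pow hα hπ' (n := 1)
      (orderOf_dvd_of_pow_eq_one hπ)
  have := alternatingGroup.kleinFour_isKleinFour hα
  have hcomm := mul_comm_of_exponent_two
    (IsKleinFour.exponent_two (G := alternatingGroup.kleinFour α))
    ⟨_, mem_kleinFour hσ hσ'⟩ ⟨_, mem_kleinFour hτ hτ'⟩
  simpa [Subtype.ext_iff, commute_iff_eq] using hcomm

lemma isSwap_of_sq_eq_one_of_sign_eq_neg_one (hα : Nat.card α ≤ 5) (hσ : σ ^ 2 = 1)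
    (hσ' : sign σ = -1) : σ.IsSwap := by
  have cycleType_eq := cycleType_of_pow_prime_eq_one hσ
  have card_le : σ.cycleType.card * 2 ≤ 5 := by
    have := (sum_cycleType_le σ).trans (Nat.card_eq_fintype_card (α := α) ▸ hα)
    rwa [cycleType_eq, Multiset.sum_replicate, smul_eq_mul] at this
  have card_odd : Odd σ.cycleType.card := by
    rw [sign_of_cycleType', cycleType_eq] at hσ'
    simpa [neg_one_pow_eq_neg_one_iff_odd] using hσ'
  have card_eq_one : σ.cycleType.card = 1 := by grind
  rw [isSwap_iff_cycleType, cycleType_eq, card_eq_one, Multiset.replicate_one]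

lemma isSwap_of_not_commute (hα : Nat.card α = 4) (hσ : σ ^ 2 = 1) (hτ : τ ^ 2 = 1)
    (hsign : sign σ = sign τ) (hcomm : ¬ Commute σ τ) : σ.IsSwap := by
  refine isSwap_of_sq_eq_one_of_sign_eq_neg_one (by lia) hσ ?_
  refine (Int.units_eq_one_or (sign σ)).resolve_left fun hσ' => hcomm ?_
  exact commute_of_sq_eq_one_of_sign_eq_one hα hσ hτ hσ' (hsign ▸ hσ')

end FourPoints

section Swap

variable {α : Type*} [DecidableEq α]

lemma eq_or_eq_of_not_commute_swap {p q r s : α} (h : ¬ Commute (swap p q) (swap r s)) :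
    p = r ∨ p = s ∨ q = r ∨ q = s := by
  contrapose! h
  obtain rfl | hpq := eq_or_ne p q
  · exact swap_self p ▸ Commute.one_left _
  obtain rfl | hrs := eq_or_ne r s
  · exact swap_self r ▸ Commute.one_right _
  exact (disjoint_swap_swap (by simp; tauto)).commute

lemma exists_swap_eq_of_not_commute {a b : Perm α} (ha : a.IsSwap) (hb : b.IsSwap)
    (hab : ¬ Commute a b) :
    ∃ i j l, i ≠ j ∧ i ≠ l ∧ j ≠ l ∧ a = swap i l ∧ b = swap j l := by
  obtain ⟨p, q, hpq, rfl⟩ := ha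
  obtain ⟨r, s, hrs, rfl⟩ := hb
  have ne : swap p q ≠ swap r s := fun h => hab (h ▸ Commute.refl _)
  obtain rfl | rfl | rfl | rfl := eq_or_eq_of_not_commute_swap hab
  · exact ⟨q, s, p, by grind [swap_comm]⟩
  · exact ⟨q, r, p, by grind [swap_comm]⟩
  · exact ⟨p, s, q, by grind [swap_comm]⟩
  · exact ⟨p, r, q, by grind [swap_comm]⟩

lemma star_or_triangle_of_not_commute {a b c : Perm α} (ha : a.IsSwap) (hb : b.IsSwap)
    (hc : c.IsSwap) (hab : ¬ Commute a b) (hac : ¬ Commute a c) (hbc : ¬ Commute b c) :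
    (∃ x : Fin 4 → α, x.Injective ∧
      a = swap (x 0) (x 3) ∧ b = swap (x 1) (x 3) ∧ c = swap (x 2) (x 3)) ∨
    (∃ x : Fin 3 → α, x.Injective ∧
      a = swap (x 0) (x 1) ∧ b = swap (x 0) (x 2) ∧ c = swap (x 1) (x 2)) := by
  obtain ⟨i, j, l, hij, hil, hjl, rfl, rfl⟩ := exists_swap_eq_of_not_commute ha hb hab
  obtain ⟨k, hkl, rfl⟩ | rfl : (∃ k, k ≠ l ∧ c = swap k l) ∨ c = swap i j := by
    obtain ⟨p, q, hpq, rfl⟩ := hc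
    have meets_il := eq_or_eq_of_not_commute_swap hac
    have meets_jl := eq_or_eq_of_not_commute_swap hbc
    grind [swap_comm]
  · have hki : k ≠ i := by rintro rfl; exact hac (Commute.refl _)
    have hkj : k ≠ j := by rintro rfl; exact hbc (Commute.refl _)
    have nodup : [i, j, k, l].Nodup := by grind
    exact Or.inl ⟨![i, j, k, l], List.nodup_ofFn.1 (by simpa using nodup), rfl, rfl, rfl⟩
  · have nodup : [l, i, j].Nodup := by grind
    exact Or.inr ⟨![l, i, j], List.nodup_ofFn.1 (by simpa using nodup), swap_comm i l,
      swap_comm j l, rfl⟩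

end Swap

section MapSwap

variable {α β : Type*} [DecidableEq α] [Finite α] [DecidableEq β]

lemma isSwap_map_swap (hβ : Nat.card β = 4) {f : Perm α →* Perm β} (hf : ¬ IsCyclic f.range)
    {i j k : α} (hij : i ≠ j) (hik : i ≠ k) (hjk : j ≠ k) : (f (swap i k)).IsSwap := by
  have := Nat.finite_of_card_ne_zero (hβ ▸ four_ne_zero)
  have := Fintype.ofFinite β
  have map_swap_sq (m n : α) : f (swap m n) ^ 2 = 1 := by
    rw [← map_pow, pow_two, swap_mul_self, map_one]
  have sign_eq : sign (f (swap i k)) = sign (f (swap j k)) :=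
    isConj_iff_eq.1 ((sign.comp f).map_isConj (isConj_swap hik hjk))
  exact isSwap_of_not_commute hβ (map_swap_sq i k) (map_swap_sq j k) sign_eq
    (not_commute_map_swap hf hij hik hjk)

lemma star_or_triangle_map_swap (hβ : Nat.card β = 4) {f : Perm α →* Perm β}
    (hf : ¬ IsCyclic f.range) {i j k l : α} (h : [i, j, k, l].Nodup) :
    (∃ x : Fin 4 → β, x.Injective ∧ f (swap i l) = swap (x 0) (x 3) ∧
      f (swap j l) = swap (x 1) (x 3) ∧ f (swap k l) = swap (x 2) (x 3)) ∨
    (∃ x : Fin 3 → β, x.Injective ∧ f (swap i l) = swap (x 0) (x 1) ∧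
      f (swap j l) = swap (x 0) (x 2) ∧ f (swap k l) = swap (x 1) (x 2)) := by
  obtain ⟨⟨hij, hik, hil⟩, ⟨hjk, hjl⟩, hkl⟩ :
      (i ≠ j ∧ i ≠ k ∧ i ≠ l) ∧ (j ≠ k ∧ j ≠ l) ∧ k ≠ l := by simpa using h
  exact star_or_triangle_of_not_commute
    (isSwap_map_swap hβ hf hij hil hjl)
    (isSwap_map_swap hβ hf hjk hjl hkl)
    (isSwap_map_swap hβ hf hik.symm hkl hil)
    (not_commute_map_swap hf hij hil hjl)
    (not_commute_map_swap hf hik hil hkl)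
    (not_commute_map_swap hf hjk hjl hkl)

end MapSwap

theorem noncyclic_endo_S4_inner_or_exceptional
    (f : Equiv.Perm (Fin 4) →* Equiv.Perm (Fin 4)) (hnc : ¬ IsCyclic f.range) :
    (∃ σ : Equiv.Perm (Fin 4), ∀ x : Equiv.Perm (Fin 4), f x = σ * x * σ⁻¹) ∨
    (∃ σ : Equiv.Perm (Fin 4),
      f (Equiv.swap 0 3) = σ * Equiv.swap 0 1 * σ⁻¹ ∧
      f (Equiv.swap 1 3) = σ * Equiv.swap 0 2 * σ⁻¹ ∧
      f (Equiv.swap 2 3) = σ * Equiv.swap 1 2 * σ⁻¹) := by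
  obtain ⟨x, hx, h₀, h₁, h₂⟩ | ⟨x, hx, h₀, h₁, h₂⟩ :=
    star_or_triangle_map_swap (Nat.card_fin 4) hnc (show [0, 1, 2, 3].Nodup by decide)
  · obtain ⟨σ, hσ⟩ := exists_extending_pair id x Function.injective_id hx
    have f_eq_conj : f = (MulAut.conj σ).toMonoidHom := by
      refine MonoidHom.eq_of_eqOn_dense (closure_swap_right_eq_top 3) ?_
      rintro _ ⟨i, hi, rfl⟩
      fin_cases i <;> simp_all [← swap_apply_apply]
    exact Or.inl ⟨σ, fun y => by simp [f_eq_conj]⟩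
  · obtain ⟨σ, hσ⟩ := exists_extending_pair Fin.castSucc x (Fin.castSucc_injective 3) hx
    refine Or.inr ⟨σ, ?_, ?_, ?_⟩
    all_goals simp [← swap_apply_apply, h₀, h₁, h₂, ← hσ]
end
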